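/- arXiv:1609.06355 — 3 statements merged into one kernel-verified Lean document; each statement's English description precedes it below -/
import Mathlib

section
/- If C : {0,1}^k → {0,1}^n is a (q, δ, η)-locally decodable code, then C is also a (q, q/δ, η)-smooth code. -/
/-- A randomized non-adaptive `q`-query decoder for codewords in `{0,1}^n`, modeled as a
finitely supported probability distribution over pairs `(S, g)` where `S` is the query set
(of size at most `q`) and `g` is an output function depending only on the coordinates in `S`. -/
structure Decoder (n q : ℕ) where
  p : Finset (Fin n) × ((Fin n → Bool) → Bool) → ℝ
  nonneg : ∀ a, 0 ≤ p a
  sum_one : ∑ a, p a = 1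
  query_bound : ∀ a, p a ≠ 0 → a.1.card ≤ q
  local_dep : ∀ a, p a ≠ 0 → ∀ y y' : Fin n → Bool, (∀ j ∈ a.1, y j = y' j) → a.2 y = a.2 y'

/-- The probability that the decoder `D`, run on input `y`, outputs the bit `b`. -/
noncomputable def Decoder.correctProb {n q : ℕ} (D : Decoder n q) (y : Fin n → Bool)
    (b : Bool) : ℝ :=
  ∑ a : Finset (Fin n) × ((Fin n → Bool) → Bool), if a.2 y = b then D.p a else 0

/-- The probability that the decoder `D` queries coordinate `j`. -/
noncomputable def Decoder.queryProb {n q : ℕ} (D : Decoder n q) (j : Fin n) : ℝ :=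
  ∑ a : Finset (Fin n) × ((Fin n → Bool) → Bool), if j ∈ a.1 then D.p a else 0

/-- `C : {0,1}^k → {0,1}^n` is a `(q,δ,η)`-locally decodable code. -/
def IsLDC (k n q : ℕ) (δ η : ℝ) (C : (Fin k → Bool) → Fin n → Bool) : Prop :=
  ∀ i : Fin k, ∃ D : Decoder n q,
    ∀ x : Fin k → Bool, ∀ y : Fin n → Bool,
      ((Finset.univ.filter fun j => y j ≠ C x j).card : ℝ) ≤ δ * n →
      1/2 + η ≤ D.correctProb y (x i)

/-- `C : {0,1}^k → {0,1}^n` is a `(q,c,η)`-smooth code. -/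
def IsSmoothCode (k n q : ℕ) (c η : ℝ) (C : (Fin k → Bool) → Fin n → Bool) : Prop :=
  ∀ i : Fin k, ∃ D : Decoder n q,
    (∀ x : Fin k → Bool, 1/2 + η ≤ D.correctProb (C x) (x i)) ∧
    ∀ j : Fin n, D.queryProb j ≤ c / n

/-- `C : {0,1}^k → {0,1}^n` is a `(q,c,η)`-average-case smooth code: the success probability
`1/2 + η` is only required on average over a uniform message `x` and uniform index `i`. -/
def IsAvgSmoothCode (k n q : ℕ) (c η : ℝ) (C : (Fin k → Bool) → Fin n → Bool) : Prop :=
  ∃ D : Fin k → Decoder n q,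
    (∀ i : Fin k, ∀ j : Fin n, (D i).queryProb j ≤ c / n) ∧
    1/2 + η ≤ (∑ x : Fin k → Bool, ∑ i : Fin k, (D i).correctProb (C x) (x i)) / (2^k * k)

/-!
A decoder makes at most `q` queries, so its query probabilities add up to at most `q`, and by
Markov's inequality at most `δ * n` coordinates are queried with probability above `q / (δ * n)`.
Let the decoder stop reading these coordinates and substitute constants for them. On a codeword
this looks like the original decoder run on a word in which at most `δ * n` coordinates are
corrupted, so it still succeeds with probability `1 / 2 + η`, and it queries no coordinate too
often.
-/

theorem sum_ite_sum_fiber {α β M : Type*} [Fintype α] [Fintype β] [DecidableEq β] [AddCommMonoid M]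
    (φ : α → β) (f : α → M) (P : β → Prop) [DecidablePred P] :
    (∑ b, if P b then ∑ a with φ a = b, f a else 0) = ∑ a, if P (φ a) then f a else 0 := by
  simp only [← Finset.sum_filter, Finset.sum_fiberwise_eq_sum_filter, Finset.mem_filter_univ]

theorem hammingDist_piecewise_le_card {ι : Type*} {β : ι → Type*} [Fintype ι] [DecidableEq ι]
    [∀ i, DecidableEq (β i)] (s : Finset ι) (z y : ∀ i, β i) :
    hammingDist (s.piecewise z y) y ≤ s.card := by
  refine Finset.card_le_card fun i hi => ?_
  by_contra his
  exact (Finset.mem_filter_univ i).1 hi (s.piecewise_eq_of_notMem z y his)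

namespace Decoder

open Finset

variable {n q : ℕ}

theorem queryProb_nonneg (D : Decoder n q) (j : Fin n) : 0 ≤ D.queryProb j :=
  sum_nonneg fun a _ => ite_nonneg (D.nonneg a) le_rfl

theorem sum_queryProb_eq_sum_card_mul (D : Decoder n q) :
    ∑ j, D.queryProb j = ∑ a, (a.1.card : ℝ) * D.p a := by
  simp only [queryProb]
  rw [sum_comm]
  simp only [sum_ite_mem, univ_inter, sum_const, nsmul_eq_mul]

theorem sum_queryProb_le (D : Decoder n q) : ∑ j, D.queryProb j ≤ q := by
  have card_mul_le (a) : (a.1.card : ℝ) * D.p a ≤ q * D.p a := by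
    obtain hp | hp := eq_or_ne (D.p a) 0
    · simp [hp]
    · exact mul_le_mul_of_nonneg_right (Nat.cast_le.2 (D.query_bound a hp)) (D.nonneg a)
  calc ∑ j, D.queryProb j = ∑ a, (a.1.card : ℝ) * D.p a := D.sum_queryProb_eq_sum_card_mul
    _ ≤ ∑ a, q * D.p a := sum_le_sum fun a _ => card_mul_le a
    _ = q := by rw [← mul_sum, D.sum_one, mul_one]

/-- The coordinates that `D` queries with probability above the threshold `t`. -/
noncomputable def heavyCoords (D : Decoder n q) (t : ℝ) : Finset (Fin n) :=
  {j | t < D.queryProb j}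

theorem card_heavyCoords_mul_le (D : Decoder n q) (t : ℝ) : (D.heavyCoords t).card * t ≤ q :=
  calc (D.heavyCoords t).card * t = (D.heavyCoords t).card • t := (nsmul_eq_mul _ _).symm
    _ ≤ ∑ j ∈ D.heavyCoords t, D.queryProb j :=
        card_nsmul_le_sum _ _ _ fun j hj => ((mem_filter_univ j).1 hj).le
    _ ≤ ∑ j, D.queryProb j := sum_le_univ_sum_of_nonneg D.queryProb_nonneg
    _ ≤ q := D.sum_queryProb_le

/-- The action of hardwiring on a single outcome `(S, g)` of a decoder's randomness: the
coordinates in `B` are no longer queried, and `g` is evaluated as if they carried the bits of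
`z`. -/
def hardwireOutcome (B : Finset (Fin n)) (z : Fin n → Bool)
    (a : Finset (Fin n) × ((Fin n → Bool) → Bool)) :
    Finset (Fin n) × ((Fin n → Bool) → Bool) :=
  (a.1 \ B, fun y => a.2 (B.piecewise z y))

/-- The decoder that simulates `D` without reading the coordinates in `B`, whose values are
hardwired to those of `z`. Its distribution is the pushforward of that of `D`, since distinct
outcomes of `D` may become equal. -/
noncomputable def hardwire (D : Decoder n q) (B : Finset (Fin n)) (z : Fin n → Bool) :
    Decoder n q where
  p b := ∑ a with hardwireOutcome B z a = b, D.p a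
  nonneg _ := sum_nonneg fun a _ => D.nonneg a
  sum_one := (sum_fiberwise _ _ _).trans D.sum_one
  query_bound b hb := by
    obtain ⟨a, ha, hp⟩ := exists_ne_zero_of_sum_ne_zero hb
    obtain rfl := (mem_filter_univ a).1 ha
    exact (card_le_card sdiff_subset).trans (D.query_bound a hp)
  local_dep b hb y y' hy := by
    obtain ⟨a, ha, hp⟩ := exists_ne_zero_of_sum_ne_zero hb
    obtain rfl := (mem_filter_univ a).1 ha
    refine D.local_dep a hp _ _ fun j hj => ?_
    by_cases hjB : j ∈ B
    · simp only [piecewise_eq_of_mem _ _ _ hjB]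
    · simpa only [piecewise_eq_of_notMem _ _ _ hjB] using hy j (mem_sdiff.2 ⟨hj, hjB⟩)

theorem correctProb_hardwire (D : Decoder n q) (B : Finset (Fin n)) (z y : Fin n → Bool)
    (b : Bool) : (D.hardwire B z).correctProb y b = D.correctProb (B.piecewise z y) b :=
  sum_ite_sum_fiber (hardwireOutcome B z) D.p fun a => a.2 y = b

theorem queryProb_hardwire (D : Decoder n q) (B : Finset (Fin n)) (z : Fin n → Bool) (j : Fin n) :
    (D.hardwire B z).queryProb j = if j ∈ B then 0 else D.queryProb j := by
  have pushforward : (D.hardwire B z).queryProb j = ∑ a, if j ∈ a.1 \ B then D.p a else 0 :=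
    sum_ite_sum_fiber (hardwireOutcome B z) D.p fun a => j ∈ a.1
  rw [pushforward]
  split_ifs with hj
  · simp [hj]
  · simp [hj, queryProb]

theorem queryProb_hardwire_heavyCoords_le (D : Decoder n q) {t : ℝ} (ht : 0 ≤ t)
    (z : Fin n → Bool) (j : Fin n) : (D.hardwire (D.heavyCoords t) z).queryProb j ≤ t := by
  rw [queryProb_hardwire]
  split_ifs with hj
  · exact ht
  · exact not_lt.1 fun hlt => hj ((mem_filter_univ j).2 hlt)

end Decoder

/-- Katz–Trevisan, first direction: a `(q,δ,η)`-LDC is a `(q, q/δ, η)`-smooth code. -/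
theorem LDC_is_smooth_code (k n q : ℕ) (hk : 0 < k) (hn : 0 < n) (hq : 0 < q)
    (δ η : ℝ) (hδ : δ ∈ Set.Ioc (0 : ℝ) (1/2)) (hη : η ∈ Set.Ioc (0 : ℝ) (1/2))
    (C : (Fin k → Bool) → Fin n → Bool) (hC : IsLDC k n q δ η C) :
    IsSmoothCode k n q ((q : ℝ) / δ) η C := by
  intro i
  obtain ⟨D, hD⟩ := hC i
  have hδ_pos : 0 < δ := hδ.1
  have threshold_pos : 0 < (q : ℝ) / δ / n := by positivity
  let heavy := D.heavyCoords (q / δ / n)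
  have card_heavy_le : (heavy.card : ℝ) ≤ δ * n :=
    calc (heavy.card : ℝ) ≤ q / (q / δ / n) :=
          (le_div_iff₀ threshold_pos).2 (D.card_heavyCoords_mul_le _)
      _ = δ * n := by field_simp
  let z : Fin n → Bool := fun _ => false
  refine ⟨D.hardwire heavy z, fun x => ?_,
    D.queryProb_hardwire_heavyCoords_le threshold_pos.le z⟩
  have corruption_le : (hammingDist (heavy.piecewise z (C x)) (C x) : ℝ) ≤ δ * n :=
    (Nat.cast_le.2 (hammingDist_piecewise_le_card heavy z (C x))).trans card_heavy_le
  rw [D.correctProb_hardwire]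
  exact hD x _ corruption_le
end

section
/- There exist absolute constants c1, c2, c3 > 0 such that the following holds. Let C : {0,1}^k → {0,1}^n be a (q, c, η)-average-case smooth code. Then there exists a (q, δ', η')-locally decodable code C' : {0,1}^l → {0,1}^n with δ' ≥ c1·η/c, η' ≥ c2·η, and l ≥ c3·η²·k / log(1/η). -/
/-!
Let `aₓ(i)` be the probability that the `i`-th decoder answers `true` on `C x`, and round these
probabilities down to multiples of `w = η / 10`. Take a maximal set `T` of rounded vectors at
pairwise `ℓ¹`-distance more than `4k` levels. Every `aₓ` is within `5wk` of an element of `T`, so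
predicting `x` from that element still has advantage `η / 2`; since a fixed prediction is
exponentially unlikely to have such an advantage on a random message, `|T| ≥ exp (η² k / 2)`.

By induction along splits of the class at one level of one coordinate (Mendelson–Vershynin), a
separated class of size `M` is shattered at at least `√M` centers. For a coordinate `g` and a level
`a` let `L`, `E`, `U` count the `f` in the class with `g f` below, at and above `a`. Then
`∑ |g f - g f'| = 2 ∑ₐ L (M - L)`; separation makes the left side larger than `2 M²` for some `g`,
and as `∑ₐ M E = M²` there is an `a` with `M E < L (M - L)`, which forces `√M ≤ √L + √U`. Each
center of a part is a center of the class, and each center common to both parts yields one more.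

There are too few centers of small support, so one of them has support of size
`Ω(η² k / log (1/η))`, and on this support the family `a` realizes all patterns of being above or
below some thresholds by a margin `η / 20`. Encode a message on the support by any codeword that
realizes it, and decode by mixing the original decoder with constant answers so that the threshold
moves to `1/2`. By smoothness, few errors move the answer probabilities only slightly.
-/

open Finset

section Splitting

variable {α : Type*} {N : ℕ}

lemma natDist_eq_card_Ioc_add_card_Ioc (x y : Fin N) :
    Nat.dist x y = #(Ioc x y) + #(Ioc y x) := by
  rw [Fin.card_Ioc, Fin.card_Ioc, Nat.dist, add_comm]

lemma sum_card_Ioc_eq_sum_card_mul_card (F : Finset α) (g : α → Fin N) :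
    ∑ f ∈ F, ∑ f' ∈ F, #(Ioc (g f) (g f')) =
      ∑ a, #{f ∈ F | g f < a} * #{f ∈ F | a ≤ g f} := by
  have card_Ioc_eq_sum (x y : Fin N) :
      #(Ioc x y) = ∑ a, (if x < a then 1 else 0) * (if a ≤ y then 1 else 0) := by
    simp only [ite_zero_mul_ite_zero, mul_one, ← card_filter]
    congr 1; ext; simp
  simp_rw [card_Ioc_eq_sum, card_filter, sum_mul_sum]
  rw [sum_comm_cycle]

lemma sum_natDist_eq_two_mul_sum_card_mul_card (F : Finset α) (g : α → Fin N) :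
    ∑ f ∈ F, ∑ f' ∈ F, Nat.dist (g f) (g f') =
      2 * ∑ a, #{f ∈ F | g f < a} * #{f ∈ F | a ≤ g f} := by
  simp_rw [natDist_eq_card_Ioc_add_card_Ioc, sum_add_distrib]
  rw [sum_comm (f := fun f f' ↦ #(Ioc (g f') (g f))), sum_card_Ioc_eq_sum_card_mul_card, two_mul]

lemma exists_card_mul_card_eq_lt {F : Finset α} {g : α → Fin N}
    (h : 2 * #F ^ 2 < ∑ f ∈ F, ∑ f' ∈ F, Nat.dist (g f) (g f')) :
    ∃ a, #F * #{f ∈ F | g f = a} < #{f ∈ F | g f < a} * #{f ∈ F | a ≤ g f} := by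
  have hcard : ∑ a, #F * #{f ∈ F | g f = a} = #F ^ 2 := by
    rw [← mul_sum, ← card_eq_sum_card_fiberwise fun _ _ ↦ mem_coe.2 (mem_univ _), sq]
  rw [sum_natDist_eq_two_mul_sum_card_mul_card, ← hcard] at h
  obtain ⟨a, -, ha⟩ := exists_lt_of_sum_lt (lt_of_mul_lt_mul_left h zero_le_two)
  exact ⟨a, ha⟩

lemma sqrt_add_add_le_sqrt_add_sqrt {l e u : ℝ} (hl : 0 ≤ l) (he : 0 ≤ e) (hu : 0 ≤ u)
    (h : (l + e + u) * e ≤ l * (e + u)) : √(l + e + u) ≤ √l + √u := by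
  rcases (by positivity : 0 ≤ l + e + u).eq_or_lt with hn | hn
  · rw [← hn, Real.sqrt_zero]; positivity
  have hsl : l ≤ √(l + e + u) * √l := by
    rw [← Real.sqrt_mul hn.le]
    exact Real.le_sqrt_of_sq_le (by nlinarith)
  have hsu : e + u ≤ √(l + e + u) * √u := by
    rw [← Real.sqrt_mul hn.le]
    exact Real.le_sqrt_of_sq_le (by nlinarith)
  refine le_of_mul_le_mul_left ?_ (Real.sqrt_pos.2 hn)
  rw [Real.mul_self_sqrt hn.le]
  linarith

lemma exists_sqrt_card_le_sqrt_card_add_sqrt_card {F : Finset α} {g : α → Fin N}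
    (h : 2 * #F ^ 2 < ∑ f ∈ F, ∑ f' ∈ F, Nat.dist (g f) (g f')) :
    ∃ a, (∃ f ∈ F, g f < a) ∧ (∃ f ∈ F, a ≤ g f) ∧
      √(#F : ℝ) ≤ √(#{f ∈ F | g f < a} : ℝ) + √(#{f ∈ F | a < g f} : ℝ) := by
  classical
  obtain ⟨a, ha⟩ := exists_card_mul_card_eq_lt h
  have hpos := Nat.pos_of_mul_pos_left (Nat.zero_lt_of_lt ha)
  have hpos' := Nat.pos_of_mul_pos_right (Nat.zero_lt_of_lt ha)
  refine ⟨a, by simpa [card_pos, Finset.Nonempty] using hpos',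
    by simpa [card_pos, Finset.Nonempty] using hpos, ?_⟩
  have hge : #{f ∈ F | a ≤ g f} = #{f ∈ F | g f = a} + #{f ∈ F | a < g f} := by
    rw [← card_union_of_disjoint (disjoint_filter.2 fun f _ hf hf' ↦ hf'.ne' hf), ← filter_or]
    simp only [le_iff_eq_or_lt, eq_comm]
  have hF : #F = #{f ∈ F | g f < a} + #{f ∈ F | g f = a} + #{f ∈ F | a < g f} := by
    rw [add_assoc, ← hge, ← card_filter_add_card_filter_not (s := F) (g · < a)]
    simp only [not_lt]
  rw [hge, hF] at ha
  rw [hF]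
  push_cast
  exact sqrt_add_add_le_sqrt_add_sqrt (by positivity) (by positivity) (by positivity)
    (by exact_mod_cast ha.le)

end Splitting

section Shattering

variable {ι V : Type*} [LinearOrder V] [OrderBot V] {F G : Finset (ι → V)} {s : ι → V}

/-- The class `F` is shattered at the center `s`: every pattern of being strictly above or strictly
below `s` occurs in `F`. The value `s i = ⊥`, below which there is nothing, encodes that no
requirement is made at the coordinate `i`. -/
def ShatteredAt (F : Finset (ι → V)) (s : ι → V) : Prop :=
  ∀ z : ι → Bool, ∃ f ∈ F, ∀ i, s i ≠ ⊥ → if z i then s i < f i else f i < s i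

lemma ShatteredAt.mono (hFG : F ⊆ G) (h : ShatteredAt F s) : ShatteredAt G s := fun z ↦
  let ⟨f, hf, hfz⟩ := h z
  ⟨f, hFG hf, hfz⟩

lemma ShatteredAt.lt_of_forall_lt {i : ι} {a : V} (h : ShatteredAt F s) (hi : s i ≠ ⊥)
    (ha : ∀ f ∈ F, a < f i) : a < s i := by
  obtain ⟨f, hf, hfz⟩ := h fun _ ↦ false
  exact (ha f hf).trans (by simpa using hfz i hi)

lemma ShatteredAt.lt_of_forall_gt {i : ι} {a : V} (h : ShatteredAt F s) (hi : s i ≠ ⊥)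
    (ha : ∀ f ∈ F, f i < a) : s i < a := by
  obtain ⟨f, hf, hfz⟩ := h fun _ ↦ true
  exact lt_trans (by simpa using hfz i hi) (ha f hf)

lemma ShatteredAt.update [DecidableEq ι] {i : ι} {a : V}
    (hlow : ShatteredAt {f ∈ F | f i < a} s) (hhigh : ShatteredAt {f ∈ F | a < f i} s) :
    ShatteredAt F (Function.update s i a) := by
  intro z
  obtain ⟨f, hfF, hfi, hfz⟩ : ∃ f ∈ F, (if z i then a < f i else f i < a) ∧
      ∀ j, s j ≠ ⊥ → if z j then s j < f j else f j < s j := by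
    cases hz : z i
    · simpa [hz, and_assoc] using hlow z
    · simpa [hz, and_assoc] using hhigh z
  refine ⟨f, hfF, fun j hj ↦ ?_⟩
  rcases eq_or_ne j i with rfl | hji
  · simpa only [Function.update_self] using hfi
  · rw [Function.update_of_ne hji] at hj ⊢
    exact hfz j hj

variable [Fintype ι] [Fintype V]

open Classical in
/-- The finite set of all centers at which `F` is shattered. -/
noncomputable def centers (F : Finset (ι → V)) : Finset (ι → V) := {s | ShatteredAt F s}

lemma mem_centers : s ∈ centers F ↔ ShatteredAt F s := by simp [centers]

lemma centers_mono (hFG : F ⊆ G) : centers F ⊆ centers G := fun _ hs ↦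
  mem_centers.2 ((mem_centers.1 hs).mono hFG)

lemma centers_nonempty (hF : F.Nonempty) : (centers F).Nonempty :=
  let ⟨f, hf⟩ := hF
  ⟨fun _ ↦ ⊥, mem_centers.2 fun _ ↦ ⟨f, hf, fun _ h ↦ absurd rfl h⟩⟩

-- A center common to both halves is inactive at `i`, and activating it there at level `a` gives a
-- center of `F` that belongs to neither half.
lemma card_centers_add_card_centers_le {i : ι} {a : V} (ha : a ≠ ⊥) :
    #(centers {f ∈ F | f i < a}) + #(centers {f ∈ F | a < f i}) ≤ #(centers F) := by
  classical
  set L := centers {f ∈ F | f i < a}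
  set U := centers {f ∈ F | a < f i}
  have lt_of_mem_L {s} (hs : s ∈ L) (hi : s i ≠ ⊥) : s i < a :=
    (mem_centers.1 hs).lt_of_forall_gt hi fun f hf ↦ (mem_filter.1 hf).2
  have lt_of_mem_U {s} (hs : s ∈ U) (hi : s i ≠ ⊥) : a < s i :=
    (mem_centers.1 hs).lt_of_forall_lt hi fun f hf ↦ (mem_filter.1 hf).2
  have eq_bot {s} (hs : s ∈ L ∩ U) : s i = ⊥ := by
    by_contra hi
    exact lt_asymm (lt_of_mem_L (mem_inter.1 hs).1 hi) (lt_of_mem_U (mem_inter.1 hs).2 hi)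
  have update_bot {s} (hs : s ∈ L ∩ U) : Function.update (Function.update s i a) i ⊥ = s := by
    rw [Function.update_idem, ← eq_bot hs, Function.update_eq_self]
  have hinj : Set.InjOn (fun s : ι → V ↦ Function.update s i a) (L ∩ U : Finset (ι → V)) :=
    Set.LeftInvOn.injOn (f₁' := fun s ↦ Function.update s i ⊥) fun s hs ↦ update_bot hs
  have hdisj : Disjoint (L ∪ U) ((L ∩ U).image fun s ↦ Function.update s i a) := by
    simp only [disjoint_right, forall_mem_image, mem_union, not_or]
    exact fun s _ ↦ ⟨fun h ↦ by simpa using lt_of_mem_L h (by simpa using ha),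
      fun h ↦ by simpa using lt_of_mem_U h (by simpa using ha)⟩
  have hsub : (L ∪ U) ∪ ((L ∩ U).image fun s ↦ Function.update s i a) ⊆ centers F := by
    refine union_subset (union_subset (centers_mono (filter_subset _ _))
      (centers_mono (filter_subset _ _))) (image_subset_iff.2 fun s hs ↦ ?_)
    rw [mem_inter, mem_centers, mem_centers] at hs
    exact mem_centers.2 (hs.1.update hs.2)
  calc #L + #U = #(L ∪ U) + #(L ∩ U) := (card_union_add_card_inter L U).symm
    _ = #((L ∪ U) ∪ (L ∩ U).image fun s ↦ Function.update s i a) := by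
      rw [card_union_of_disjoint hdisj, card_image_of_injOn hinj]
    _ ≤ #(centers F) := card_le_card hsub

end Shattering

section SupportCount

variable {ι V : Type*} [Fintype ι] [Fintype V] [DecidableEq V]

-- The weight `t ^ #{i | s i ≠ v₀}` is multiplicative over the coordinates of `s`.
lemma card_mul_rpow_le_of_card_support_le (v₀ : V) (S : Finset (ι → V)) {D t : ℝ}
    (ht : 0 < t) (ht1 : t ≤ 1) (hS : ∀ s ∈ S, (#{i | s i ≠ v₀} : ℝ) ≤ D) :
    #S * t ^ D ≤ (1 + (Fintype.card V - 1) * t) ^ Fintype.card ι := by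
  classical
  have : Nonempty V := ⟨v₀⟩
  have hprod (s : ι → V) : ∏ i, (if s i ≠ v₀ then t else 1) = t ^ #{i | s i ≠ v₀} := by
    rw [prod_ite, prod_const, prod_const_one, mul_one]
  have hlevel : ∑ v : V, (if v ≠ v₀ then t else 1) = 1 + (Fintype.card V - 1) * t := by
    rw [← add_sum_erase _ _ (mem_univ v₀), sum_congr rfl fun v hv ↦ if_pos (ne_of_mem_erase hv),
      sum_const, card_erase_of_mem (mem_univ _), card_univ, nsmul_eq_mul,
      Nat.cast_pred Fintype.card_pos, if_neg (by simp)]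
  calc #S * t ^ D ≤ ∑ s ∈ S, t ^ #{i | s i ≠ v₀} := by
        rw [← nsmul_eq_mul, ← sum_const]
        gcongr with s hs
        rw [← Real.rpow_natCast]
        exact Real.rpow_le_rpow_of_exponent_ge ht ht1 (hS s hs)
    _ ≤ ∑ s : ι → V, t ^ #{i | s i ≠ v₀} :=
        sum_le_sum_of_subset_of_nonneg (subset_univ _) fun _ _ _ ↦ by positivity
    _ = (1 + (Fintype.card V - 1) * t) ^ Fintype.card ι := by
        simp_rw [← hprod]
        rw [← Fintype.piFinset_univ, sum_prod_piFinset univ fun _ v ↦ if v ≠ v₀ then t else 1,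
          hlevel, prod_const, card_univ]

end SupportCount

section Packing

variable {ι : Type*} [Fintype ι] {N : ℕ}

/-- The relation of being at `ℓ¹`-distance at most `r`, as a relation to which `SetRel.IsSeparated`
and `SetRel.IsCover` apply. -/
def l1Near (ι : Type*) [Fintype ι] (N r : ℕ) : SetRel (ι → Fin N) (ι → Fin N) :=
  {(f, g) | ∑ i, Nat.dist (f i) (g i) ≤ r}

instance (r : ℕ) : (l1Near ι N r).IsRefl := ⟨fun f ↦ by simp [l1Near]⟩

instance (r : ℕ) : (l1Near ι N r).IsSymm :=
  ⟨fun f g h ↦ by simpa only [l1Near, Set.mem_ofPred_eq, Nat.dist_comm] using h⟩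

lemma exists_isSeparated_isCover {X : Type*} (R : SetRel X X) [R.IsRefl] [R.IsSymm]
    (G : Finset X) : ∃ T ⊆ G, R.IsSeparated (T : Set X) ∧ R.IsCover (G : Set X) T := by
  obtain ⟨T, hT⟩ := (G.finite_toSet.finite_subsets.subset
    fun T (hT : T ⊆ G ∧ R.IsSeparated T) ↦ hT.1).exists_maximal
    ⟨∅, Set.empty_subset _, .empty⟩
  lift T to Finset X using G.finite_toSet.subset hT.prop.1
  exact ⟨T, coe_subset.1 hT.prop.1, hT.prop.2, .of_maximal_isSeparated hT⟩

lemma exists_coord_two_mul_sq_card_lt {F : Finset (ι → Fin N)}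
    (hF : (l1Near ι N (4 * Fintype.card ι)).IsSeparated (F : Set (ι → Fin N))) (hF2 : 1 < #F) :
    ∃ i, 2 * #F ^ 2 < ∑ f ∈ F, ∑ f' ∈ F, Nat.dist (f i) (f' i) := by
  classical
  have hrow {f} (hf : f ∈ F) :
      4 * Fintype.card ι * (#F - 1) < ∑ f' ∈ F, ∑ i, Nat.dist (f i) (f' i) := by
    rw [← add_sum_erase F _ hf, ← card_erase_of_mem hf, mul_comm, ← smul_eq_mul, ← sum_const]
    refine lt_add_of_nonneg_of_lt (Nat.zero_le _) (sum_lt_sum_of_nonempty ?_ fun f' hf' ↦ ?_)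
    · rw [← card_pos, card_erase_of_mem hf]; omega
    · exact not_le.1 (hF hf (mem_of_mem_erase hf') (ne_of_mem_erase hf').symm)
  have htotal : ∑ _i : ι, 2 * #F ^ 2 < ∑ i, ∑ f ∈ F, ∑ f' ∈ F, Nat.dist (f i) (f' i) := calc
    ∑ _i : ι, 2 * #F ^ 2 = #F * (2 * Fintype.card ι * #F) := by simp; ring
    _ ≤ #F * (4 * Fintype.card ι * (#F - 1)) := by
      have : #F ≤ 2 * (#F - 1) := by omega
      exact Nat.mul_le_mul_left _ (by nlinarith)
    _ = ∑ f ∈ F, 4 * Fintype.card ι * (#F - 1) := by simp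
    _ < ∑ f ∈ F, ∑ f' ∈ F, ∑ i, Nat.dist (f i) (f' i) :=
      sum_lt_sum_of_nonempty (card_pos.1 (by omega)) fun f hf ↦ hrow hf
    _ = ∑ i, ∑ f ∈ F, ∑ f' ∈ F, Nat.dist (f i) (f' i) := by
      rw [sum_comm_cycle, sum_comm]
  obtain ⟨i, -, hi⟩ := exists_lt_of_sum_lt htotal
  exact ⟨i, hi⟩

lemma sqrt_card_le_card_centers [NeZero N] (F : Finset (ι → Fin N))
    (hF : (l1Near ι N (4 * Fintype.card ι)).IsSeparated (F : Set (ι → Fin N))) :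
    √(#F : ℝ) ≤ #(centers F) := by
  induction F using Finset.strongInduction with
  | H F ih =>
  rcases F.eq_empty_or_nonempty with rfl | hne
  · simp
  rcases (Nat.one_le_iff_ne_zero.2 hne.card_ne_zero).eq_or_lt with hF1 | hF2
  · rw [← hF1, Nat.cast_one, Real.sqrt_one, Nat.one_le_cast]
    exact (centers_nonempty hne).card_pos
  obtain ⟨i, hi⟩ := exists_coord_two_mul_sq_card_lt hF hF2
  obtain ⟨a, ⟨f, hf, hfa⟩, ⟨f', hf', haf'⟩, hsqrt⟩ :=
    exists_sqrt_card_le_sqrt_card_add_sqrt_card (g := fun f : ι → Fin N ↦ f i) hi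
  have hlow := ih {f ∈ F | f i < a} (filter_ssubset.2 ⟨f', hf', haf'.not_gt⟩)
    (hF.mono_right (coe_subset.2 (filter_subset _ _)))
  have hhigh := ih {f ∈ F | a < f i} (filter_ssubset.2 ⟨f, hf, hfa.not_gt⟩)
    (hF.mono_right (coe_subset.2 (filter_subset _ _)))
  calc √(#F : ℝ) ≤ #(centers {f ∈ F | f i < a}) + #(centers {f ∈ F | a < f i}) :=
        hsqrt.trans (add_le_add hlow hhigh)
    _ ≤ #(centers F) := by exact_mod_cast card_centers_add_card_centers_le (ne_bot_of_gt hfa)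

end Packing

section Agreement

/-- The probability that a random bit which is `true` with probability `p` equals `b`. -/
def bitProb (p : ℝ) (b : Bool) : ℝ := if b then p else 1 - p

lemma bitProb_sub_abs_sub_le (p p' : ℝ) (b : Bool) : bitProb p b - |p - p'| ≤ bitProb p' b := by
  have := neg_abs_le (p - p')
  have := le_abs_self (p - p')
  cases b <;> simp only [bitProb, Bool.false_eq_true, if_true, if_false] <;> linarith

lemma sum_exp_mul_bitProb_sub_half_le {p : ℝ} (hp : p ∈ Set.Icc (0 : ℝ) 1) (t : ℝ) :
    ∑ b, Real.exp (t * (bitProb p b - 1 / 2)) ≤ 2 * Real.exp (t ^ 2 / 8) := by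
  calc ∑ b, Real.exp (t * (bitProb p b - 1 / 2)) = 2 * Real.cosh (t * (p - 1 / 2)) := by
        rw [Real.cosh_eq, Fintype.sum_bool]
        simp only [bitProb, Bool.false_eq_true, if_true, if_false]
        ring_nf
    _ ≤ 2 * Real.exp ((t * (p - 1 / 2)) ^ 2 / 2) := by gcongr; exact Real.cosh_le_exp_half_sq _
    _ ≤ 2 * Real.exp (t ^ 2 / 8) := by
        gcongr 2 * Real.exp ?_
        nlinarith [mul_nonneg (sq_nonneg t) (mul_nonneg hp.1 (sub_nonneg.2 hp.2))]

variable {ι : Type*} [Fintype ι] [DecidableEq ι]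

lemma sum_exp_mul_sum_bitProb_sub_half_le {p : ι → ℝ} (hp : ∀ i, p i ∈ Set.Icc (0 : ℝ) 1) (t : ℝ) :
    ∑ x : ι → Bool, Real.exp (t * ∑ i, (bitProb (p i) (x i) - 1 / 2)) ≤
      2 ^ Fintype.card ι * Real.exp (t ^ 2 / 8 * Fintype.card ι) := by
  calc ∑ x : ι → Bool, Real.exp (t * ∑ i, (bitProb (p i) (x i) - 1 / 2))
      = ∏ i, ∑ b, Real.exp (t * (bitProb (p i) b - 1 / 2)) := by
        simp_rw [mul_sum, Real.exp_sum]
        rw [← Fintype.piFinset_univ,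
          sum_prod_piFinset univ fun i b ↦ Real.exp (t * (bitProb (p i) b - 1 / 2))]
    _ ≤ ∏ _i : ι, 2 * Real.exp (t ^ 2 / 8) :=
        prod_le_prod (fun _ _ ↦ by positivity) fun i _ ↦ sum_exp_mul_bitProb_sub_half_le (hp i) t
    _ = 2 ^ Fintype.card ι * Real.exp (t ^ 2 / 8 * Fintype.card ι) := by
        rw [prod_const, card_univ, mul_pow, ← Real.exp_nat_mul, mul_comm (t ^ 2 / 8)]

-- Massart's finite class lemma, solved for the size of the class.
lemma exp_sub_le_card_of_le_sum {Ω α : Type*} [Fintype Ω] [Nonempty Ω] {T : Finset α}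
    {S : Ω → α → ℝ} {φ : Ω → α} {t u v : ℝ} (ht : 0 ≤ t) (hφ : ∀ x, φ x ∈ T)
    (hmgf : ∀ f ∈ T, ∑ x, Real.exp (t * S x f) ≤ Fintype.card Ω * Real.exp v)
    (h : Fintype.card Ω * u ≤ ∑ x, S x (φ x)) : Real.exp (t * u - v) ≤ #T := by
  have hcard : (0 : ℝ) < Fintype.card Ω := Nat.cast_pos.2 Fintype.card_pos
  have hsum : Fintype.card Ω * Real.exp (t * u) ≤ Fintype.card Ω * (#T * Real.exp v) := calc
    Fintype.card Ω * Real.exp (t * u)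
      ≤ ∑ x, Real.exp (t * u) * (t * (S x (φ x) - u) + 1) := by
        rw [← mul_sum, sum_add_distrib, ← mul_sum, sum_sub_distrib]
        simp only [sum_const, card_univ, nsmul_eq_mul, mul_one]
        rw [mul_comm]
        gcongr
        exact le_add_of_nonneg_left (mul_nonneg ht (sub_nonneg.2 h))
    _ ≤ ∑ x, Real.exp (t * S x (φ x)) := by
        gcongr with x
        calc Real.exp (t * u) * (t * (S x (φ x) - u) + 1)
            ≤ Real.exp (t * u) * Real.exp (t * (S x (φ x) - u)) := by
              gcongr; exact Real.add_one_le_exp _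
          _ = Real.exp (t * S x (φ x)) := by rw [← Real.exp_add]; ring_nf
    _ ≤ ∑ x, ∑ f ∈ T, Real.exp (t * S x f) := by
        gcongr with x
        exact single_le_sum (f := fun f ↦ Real.exp (t * S x f))
          (fun _ _ ↦ (Real.exp_pos _).le) (hφ x)
    _ = ∑ f ∈ T, ∑ x, Real.exp (t * S x f) := sum_comm
    _ ≤ ∑ _f ∈ T, Fintype.card Ω * Real.exp v := sum_le_sum hmgf
    _ = Fintype.card Ω * (#T * Real.exp v) := by rw [sum_const, nsmul_eq_mul, mul_left_comm]
  rw [Real.exp_sub, div_le_iff₀ (Real.exp_pos v)]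
  exact le_of_mul_le_mul_left hsum hcard

lemma exp_le_card_of_le_sum_bitProb {α : Type*} {T : Finset α} {p : α → ι → ℝ}
    {φ : (ι → Bool) → α} {ε : ℝ} (hε : 0 ≤ ε) (hp : ∀ f ∈ T, ∀ i, p f i ∈ Set.Icc (0 : ℝ) 1)
    (hφ : ∀ x, φ x ∈ T)
    (h : (1 / 2 + ε) * (2 ^ Fintype.card ι * Fintype.card ι) ≤
      ∑ x, ∑ i, bitProb (p (φ x) i) (x i)) :
    Real.exp (2 * ε ^ 2 * Fintype.card ι) ≤ #T := by
  convert exp_sub_le_card_of_le_sum (S := fun x f ↦ ∑ i, (bitProb (p f i) (x i) - 1 / 2))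
    (t := 4 * ε) (u := ε * Fintype.card ι) (v := (4 * ε) ^ 2 / 8 * Fintype.card ι)
    (by positivity) hφ (fun f hf ↦ ?_) ?_ using 2
  · ring
  · simpa using sum_exp_mul_sum_bitProb_sub_half_le (hp f hf) (4 * ε)
  · simp only [sum_sub_distrib, sum_const, card_univ, Fintype.card_fun, Fintype.card_bool,
      nsmul_eq_mul, Nat.cast_pow, Nat.cast_ofNat]
    linarith

end Agreement

section Rounding

lemma exists_level {w p : ℝ} (hw : 0 < w) (hp : p ∈ Set.Icc (0 : ℝ) 1) :
    ∃ v : Fin (⌊w⁻¹⌋₊ + 1), p ∈ Set.Ico (w * v) (w * (v + 1)) := by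
  have hpw : 0 ≤ p / w := div_nonneg hp.1 hw.le
  refine ⟨⟨⌊p / w⌋₊, Nat.lt_succ_of_le <| Nat.floor_mono ?_⟩, ?_, ?_⟩
  · rw [div_eq_mul_inv]
    exact mul_le_of_le_one_left (by positivity) hp.2
  · rw [← le_div_iff₀' hw]
    exact Nat.floor_le hpw
  · rw [← div_lt_iff₀' hw]
    exact Nat.lt_floor_add_one _

lemma abs_sub_mul_le_of_mem_Ico {w p : ℝ} {u v : ℕ} (hw : 0 ≤ w)
    (hp : p ∈ Set.Ico (w * v) (w * (v + 1))) : |p - w * u| ≤ w * (Nat.dist v u + 1) := by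
  have hdist : (Nat.dist v u : ℝ) = |(v : ℝ) - u| := by
    rcases le_total v u with h | h
    · rw [Nat.dist_eq_sub_of_le h, Nat.cast_sub h, abs_sub_comm, abs_of_nonneg (by simpa)]
    · rw [Nat.dist_eq_sub_of_le_right h, Nat.cast_sub h, abs_of_nonneg (by simpa)]
  have hpv : |p - w * v| ≤ w := by
    rw [abs_of_nonneg (sub_nonneg.2 hp.1)]
    linarith [hp.2]
  calc |p - w * u| ≤ |p - w * v| + |w * v - w * u| := abs_sub_le _ _ _
    _ ≤ w * (Nat.dist v u + 1) := by
      rw [← mul_sub, abs_mul, abs_of_nonneg hw, hdist]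
      linarith

variable {ι : Type*} [Fintype ι] [DecidableEq ι] {N : ℕ}

lemma exp_le_card_of_isCover {a : (ι → Bool) → ι → ℝ} {b : (ι → Bool) → ι → Fin N}
    {T : Finset (ι → Fin N)} {η w : ℝ} (hw : 0 ≤ w) (hwη : 5 * w ≤ η)
    (ha : ∀ x i, a x i ∈ Set.Icc (0 : ℝ) 1)
    (hb : ∀ x i, a x i ∈ Set.Ico (w * b x i) (w * (b x i + 1)))
    (hT : (T : Set (ι → Fin N)) ⊆ Set.range b)
    (hcov : (l1Near ι N (4 * Fintype.card ι)).IsCover (Set.range b) T)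
    (h : (1 / 2 + η) * (2 ^ Fintype.card ι * Fintype.card ι) ≤
      ∑ x, ∑ i, bitProb (a x i) (x i)) :
    Real.exp (2 * (η - 5 * w) ^ 2 * Fintype.card ι) ≤ #T := by
  choose φ hφT hφ using fun x ↦ hcov (Set.mem_range_self x)
  have hp : ∀ f ∈ T, ∀ i, w * (f i : ℝ) ∈ Set.Icc (0 : ℝ) 1 := by
    intro f hf i
    obtain ⟨x, rfl⟩ := hT hf
    exact ⟨by positivity, (hb x i).1.trans (ha x i).2⟩
  have hloss (x : ι → Bool) : ∑ i, bitProb (a x i) (x i) - 5 * w * Fintype.card ι ≤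
      ∑ i, bitProb (w * φ x i) (x i) := by
    have hdist : ((∑ i, Nat.dist (b x i) (φ x i) : ℕ) : ℝ) ≤ (4 * Fintype.card ι : ℕ) :=
      Nat.cast_le.2 (hφ x)
    push_cast at hdist
    calc ∑ i, bitProb (a x i) (x i) - 5 * w * Fintype.card ι
        ≤ ∑ i, bitProb (a x i) (x i) - ∑ i, w * (Nat.dist (b x i) (φ x i) + 1) := by
          rw [← mul_sum, sum_add_distrib, sum_const, card_univ, nsmul_one]
          nlinarith
      _ = ∑ i, (bitProb (a x i) (x i) - w * (Nat.dist (b x i) (φ x i) + 1)) :=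
          (sum_sub_distrib _ _).symm
      _ ≤ ∑ i, bitProb (w * φ x i) (x i) := sum_le_sum fun i _ ↦
          (sub_le_sub_left (abs_sub_mul_le_of_mem_Ico hw (hb x i)) _).trans
            (bitProb_sub_abs_sub_le _ _ _)
  refine exp_le_card_of_le_sum_bitProb (p := fun f i ↦ w * f i) (sub_nonneg.2 hwη) hp hφT ?_
  have hsum := sum_le_sum fun x (_ : x ∈ univ) ↦ hloss x
  simp only [sum_sub_distrib, sum_const, card_univ, Fintype.card_fun, Fintype.card_bool,
    nsmul_eq_mul, Nat.cast_pow, Nat.cast_ofNat] at hsum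
  linarith

end Rounding

section FatShattering

variable {X ι : Type*}

/-- The family `a` of real-valued functions on `ι` `γ`-fat-shatters `I` with thresholds `θ`: every
pattern of being above `θ + γ` or below `θ - γ` on `I` is realized by some member. -/
def FatShatters (a : X → ι → ℝ) (γ : ℝ) (I : Finset ι) (θ : ι → ℝ) : Prop :=
  ∀ z : ι → Bool, ∃ x, ∀ i ∈ I, if z i then θ i + γ ≤ a x i else a x i ≤ θ i - γ

lemma ShatteredAt.fatShatters [Fintype ι] {N : ℕ} [NeZero N] {a : X → ι → ℝ} {b : X → ι → Fin N}
    {w : ℝ} (hw : 0 ≤ w) (hb : ∀ x i, a x i ∈ Set.Ico (w * b x i) (w * (b x i + 1)))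
    {T : Finset (ι → Fin N)} (hT : (T : Set (ι → Fin N)) ⊆ Set.range b) {s : ι → Fin N}
    (h : ShatteredAt T s) : FatShatters a (w / 2) {i | s i ≠ ⊥} fun i ↦ w * (s i + 1 / 2) := by
  intro z
  obtain ⟨f, hf, hfz⟩ := h z
  obtain ⟨x, rfl⟩ := hT hf
  refine ⟨x, fun i hi ↦ ?_⟩
  have hlt := hfz i (mem_filter.1 hi).2
  split_ifs at hlt ⊢
  · have hsucc : (s i + 1 : ℝ) ≤ b x i := by exact_mod_cast hlt
    linarith [(hb x i).1, mul_le_mul_of_nonneg_left hsucc hw]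
  · have hsucc : (b x i + 1 : ℝ) ≤ s i := by exact_mod_cast hlt
    linarith [(hb x i).2, mul_le_mul_of_nonneg_left hsucc hw]

lemma exp_neg_mul_log_le_rpow {η D : ℝ} (hη : η ∈ Set.Ioc (0 : ℝ) (1 / 2)) (hD : 0 ≤ D) :
    Real.exp (-(10 * D * Real.log (1 / η))) ≤ (η ^ 3 / 80) ^ D := by
  have hη0 := hη.1
  have hpow : η ^ 10 ≤ η ^ 3 / 80 := by
    have : η ^ 7 ≤ (1 / 2) ^ 7 := pow_le_pow_left₀ hη0.le hη.2 7
    nlinarith [pow_pos hη0 3]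
  calc Real.exp (-(10 * D * Real.log (1 / η))) = (η ^ 10) ^ D := by
        rw [Real.rpow_def_of_pos (by positivity), Real.log_pow, one_div, Real.log_inv]
        push_cast; ring_nf
    _ ≤ (η ^ 3 / 80) ^ D := Real.rpow_le_rpow (by positivity) hpow hD

-- With weight `η ^ 3 / 80` per active coordinate, all of `ι → Fin (m + 1)` has total weight at most
-- `exp (η² k / 8)`, and a support of size at most `D` costs at least a factor `exp (-η² k / 10)`.
lemma exists_le_card_support [Fintype ι] [Nonempty ι] {m : ℕ} {η : ℝ}
    (hη : η ∈ Set.Ioc (0 : ℝ) (1 / 2)) (hm : m ≤ 10 / η) {S : Finset (ι → Fin (m + 1))}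
    (hS : Real.exp (η ^ 2 * Fintype.card ι / 4) ≤ #S) :
    ∃ s ∈ S, 1 / 100 * η ^ 2 * Fintype.card ι / Real.log (1 / η) ≤ #{i | s i ≠ ⊥} := by
  have hη0 := hη.1
  have hlog : 0 < Real.log (1 / η) := Real.log_pos (one_lt_one_div hη0 (by linarith [hη.2]))
  by_contra! hlt
  have hη1 : η ^ 3 / 80 ≤ 1 := by linarith [pow_le_one₀ hη0.le (by linarith [hη.2]) (n := 3)]
  have hk : (0 : ℝ) < Fintype.card ι := Nat.cast_pos.2 Fintype.card_pos
  set k : ℝ := (Fintype.card ι : ℝ)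
  set D := 1 / 100 * η ^ 2 * k / Real.log (1 / η) with hD
  have hDlog : 10 * D * Real.log (1 / η) = η ^ 2 * k / 10 := by rw [hD]; field_simp; norm_num
  have hexp : Real.exp (η ^ 2 * k / 4 - η ^ 2 * k / 10) ≤ Real.exp (η ^ 2 * k / 8) := calc
    Real.exp (η ^ 2 * k / 4 - η ^ 2 * k / 10)
      = Real.exp (η ^ 2 * k / 4) * Real.exp (-(10 * D * Real.log (1 / η))) := by
        rw [← Real.exp_add, hDlog, sub_eq_add_neg]
    _ ≤ #S * (η ^ 3 / 80) ^ D := by gcongr; exact exp_neg_mul_log_le_rpow hη (by positivity)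
    _ ≤ (1 + m * (η ^ 3 / 80)) ^ Fintype.card ι := by
        simpa using
          card_mul_rpow_le_of_card_support_le ⊥ S (by positivity) hη1 fun s hs ↦ (hlt s hs).le
    _ ≤ (1 + η ^ 2 / 8) ^ Fintype.card ι := by
        gcongr
        calc m * (η ^ 3 / 80) ≤ 10 / η * (η ^ 3 / 80) := by gcongr
          _ = η ^ 2 / 8 := by field_simp; norm_num
    _ ≤ Real.exp (η ^ 2 / 8) ^ Fintype.card ι := by
        gcongr
        rw [add_comm]
        exact Real.add_one_le_exp _
    _ = Real.exp (η ^ 2 * k / 8) := by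
        rw [← Real.exp_nat_mul, mul_div_assoc', mul_comm]
  have : 0 < η ^ 2 * k := by positivity
  linarith [Real.exp_le_exp.1 hexp]

lemma exists_fatShatters [Fintype ι] [DecidableEq ι] [Nonempty ι] {a : (ι → Bool) → ι → ℝ} {η : ℝ}
    (hη : η ∈ Set.Ioc (0 : ℝ) (1 / 2)) (ha : ∀ x i, a x i ∈ Set.Icc (0 : ℝ) 1)
    (h : (1 / 2 + η) * (2 ^ Fintype.card ι * Fintype.card ι) ≤
      ∑ x, ∑ i, bitProb (a x i) (x i)) :
    ∃ I θ, FatShatters a (η / 20) I θ ∧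
      1 / 100 * η ^ 2 * Fintype.card ι / Real.log (1 / η) ≤ #I := by
  have hη0 := hη.1
  set w := η / 10 with hw
  have hw0 : 0 < w := by positivity
  choose b hb using fun x i ↦ exists_level hw0 (ha x i)
  obtain ⟨T, hTb, hsep, hcov⟩ := exists_isSeparated_isCover
    (l1Near ι (⌊w⁻¹⌋₊ + 1) (4 * Fintype.card ι)) (univ.image b)
  have hTrange : (T : Set (ι → Fin (⌊w⁻¹⌋₊ + 1))) ⊆ Set.range b := by
    simpa using coe_subset.2 hTb
  have hT : Real.exp (η ^ 2 * Fintype.card ι / 2) ≤ #T := by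
    convert exp_le_card_of_isCover hw0.le (by linarith) ha hb hTrange (by simpa using hcov) h
      using 2
    rw [hw]; ring
  have hcenters : Real.exp (η ^ 2 * Fintype.card ι / 4) ≤ #(centers T) := by
    refine le_trans (Real.le_sqrt_of_sq_le ?_) (sqrt_card_le_card_centers T hsep)
    rw [← Real.exp_nat_mul]
    convert hT using 2
    push_cast; ring
  have hm : (⌊w⁻¹⌋₊ : ℝ) ≤ 10 / η := by
    simpa [hw] using Nat.floor_le (inv_nonneg.2 hw0.le)
  obtain ⟨s, hs, hsI⟩ := exists_le_card_support hη hm hcenters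
  have hγ : η / 20 = w / 2 := by rw [hw]; ring
  exact ⟨_, _, hγ ▸ (mem_centers.1 hs).fatShatters hw0.le hb hTrange, hsI⟩

end FatShattering

section Decoders

namespace Decoder

variable {n q : ℕ} (D E : Decoder n q)

lemma correctProb_true_mem_Icc (y : Fin n → Bool) : D.correctProb y true ∈ Set.Icc (0 : ℝ) 1 := by
  refine ⟨sum_nonneg fun a _ ↦ ite_nonneg (D.nonneg a) le_rfl, D.sum_one ▸ sum_le_sum fun a _ ↦ ?_⟩
  split_ifs
  exacts [le_rfl, D.nonneg a]

lemma correctProb_eq_bitProb (y : Fin n → Bool) (b : Bool) :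
    D.correctProb y b = bitProb (D.correctProb y true) b := by
  cases b
  · simp only [bitProb, Bool.false_eq_true, if_false]
    rw [eq_sub_iff_add_eq, ← D.sum_one, correctProb, correctProb, ← sum_add_distrib]
    refine sum_congr rfl fun a _ ↦ ?_
    cases a.2 y <;> simp
  · rfl

lemma correctProb_le_add_of_queryProb_le {r : ℝ} (hD : ∀ j, D.queryProb j ≤ r)
    (y y' : Fin n → Bool) (b : Bool) :
    D.correctProb y b ≤ D.correctProb y' b + #{j | y' j ≠ y j} * r := by
  have houtput (a : Finset (Fin n) × ((Fin n → Bool) → Bool)) :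
      (if a.2 y = b then D.p a else 0) ≤ (if a.2 y' = b then D.p a else 0) +
        ∑ j with y' j ≠ y j, if j ∈ a.1 then D.p a else 0 := by
    have hquery (j) (_ : j ∈ ({j | y' j ≠ y j} : Finset (Fin n))) :
        0 ≤ if j ∈ a.1 then D.p a else 0 := ite_nonneg (D.nonneg a) le_rfl
    by_cases heq : D.p a = 0 ∨ a.2 y = a.2 y'
    · have hsum := sum_nonneg hquery
      rcases heq with heq | heq
      · simp [heq]
      · simpa [heq] using hsum
    push Not at heq
    obtain ⟨j, hja, hj⟩ : ∃ j ∈ a.1, y' j ≠ y j := by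
      by_contra! h
      exact heq.2 (D.local_dep a heq.1 y y' fun j hj ↦ (h j hj).symm)
    calc (if a.2 y = b then D.p a else 0) ≤ D.p a := by split_ifs; exacts [le_rfl, D.nonneg a]
      _ = if j ∈ a.1 then D.p a else 0 := (if_pos hja).symm
      _ ≤ ∑ j with y' j ≠ y j, if j ∈ a.1 then D.p a else 0 :=
        single_le_sum hquery (mem_filter.2 ⟨mem_univ j, hj⟩)
      _ ≤ _ := le_add_of_nonneg_left (ite_nonneg (D.nonneg a) le_rfl)
  calc D.correctProb y b
      ≤ D.correctProb y' b + ∑ j with y' j ≠ y j, D.queryProb j := by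
        simp only [correctProb, queryProb]
        rw [sum_comm, ← sum_add_distrib]
        exact sum_le_sum fun a _ ↦ houtput a
    _ ≤ D.correctProb y' b + #{j | y' j ≠ y j} * r := by
        rw [← nsmul_eq_mul, ← sum_const]
        gcongr with j
        exact hD j

/-- The decoder that answers `b` without making any query. -/
def const (n q : ℕ) (b : Bool) : Decoder n q where
  p a := if a = (∅, fun _ ↦ b) then 1 else 0
  nonneg _ := ite_nonneg zero_le_one le_rfl
  sum_one := by simp
  query_bound a ha := by simp [(ite_ne_right_iff.1 ha).1]
  local_dep a ha y y' _ := by rw [(ite_ne_right_iff.1 ha).1]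

lemma correctProb_const (y : Fin n → Bool) (b b' : Bool) :
    (const n q b).correctProb y b' = if b = b' then 1 else 0 := by
  rw [correctProb, sum_eq_single (∅, fun _ ↦ b) (fun a _ ha ↦ by simp [const, ha]) (by simp)]
  simp [const]

/-- The decoder that runs `D` with probability `t` and `E` with probability `1 - t`. -/
def mix (t : ℝ) (ht : t ∈ Set.Icc (0 : ℝ) 1) : Decoder n q where
  p a := t * D.p a + (1 - t) * E.p a
  nonneg a :=
    add_nonneg (mul_nonneg ht.1 (D.nonneg a)) (mul_nonneg (sub_nonneg.2 ht.2) (E.nonneg a))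
  sum_one := by
    rw [sum_add_distrib, ← mul_sum, ← mul_sum, D.sum_one, E.sum_one]
    ring
  query_bound a ha := by
    by_cases hD : D.p a = 0
    · exact E.query_bound a fun hE ↦ ha (by simp [hD, hE])
    · exact D.query_bound a hD
  local_dep a ha := by
    by_cases hD : D.p a = 0
    · exact E.local_dep a fun hE ↦ ha (by simp [hD, hE])
    · exact D.local_dep a hD

lemma correctProb_mix {t : ℝ} (ht : t ∈ Set.Icc (0 : ℝ) 1) (y : Fin n → Bool) (b : Bool) :
    (mix D E t ht).correctProb y b = t * D.correctProb y b + (1 - t) * E.correctProb y b := by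
  simp only [correctProb, mul_sum, ← sum_add_distrib]
  refine sum_congr rfl fun a _ ↦ ?_
  split_ifs <;> simp [mix]

lemma exists_correctProb_true_eq_half_add {θ : ℝ} (hθ : θ ∈ Set.Icc (0 : ℝ) 1) :
    ∃ D' : Decoder n q, ∀ y, D'.correctProb y true = 1 / 2 + (D.correctProb y true - θ) / 2 := by
  refine ⟨mix D (mix (const n q false) (const n q true) θ hθ) (1 / 2) (by norm_num), fun y ↦ ?_⟩
  simp only [correctProb_mix, correctProb_const, Bool.false_eq_true, if_true, if_false]
  ring

end Decoder

lemma FatShatters.threshold_mem_Icc {X ι : Type*} {a : X → ι → ℝ} {γ : ℝ} {I : Finset ι}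
    {θ : ι → ℝ} (h : FatShatters a γ I θ) (ha : ∀ x i, a x i ∈ Set.Icc (0 : ℝ) 1) {i : ι}
    (hi : i ∈ I) : θ i ∈ Set.Icc γ (1 - γ) := by
  obtain ⟨x, hx⟩ := h fun _ ↦ true
  obtain ⟨x', hx'⟩ := h fun _ ↦ false
  have hge : θ i + γ ≤ a x i := by simpa using hx i hi
  have hle : a x' i ≤ θ i - γ := by simpa using hx' i hi
  constructor <;> linarith [(ha x i).2, (ha x' i).1]

variable {X ι : Type*} {n q : ℕ} {D : ι → Decoder n q} {C : X → Fin n → Bool} {γ r : ℝ}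
  {I : Finset ι} {θ : ι → ℝ}

lemma FatShatters.two_mul_le_of_queryProb_le
    (h : FatShatters (fun x i ↦ (D i).correctProb (C x) true) γ I θ)
    (hD : ∀ i j, (D i).queryProb j ≤ r) (hr : 0 ≤ r) (hI : I.Nonempty) : 2 * γ ≤ n * r := by
  obtain ⟨i, hi⟩ := hI
  obtain ⟨x, hx⟩ := h fun _ ↦ true
  obtain ⟨x', hx'⟩ := h fun _ ↦ false
  have hge : θ i + γ ≤ (D i).correctProb (C x) true := by simpa using hx i hi
  have hle : (D i).correctProb (C x') true ≤ θ i - γ := by simpa using hx' i hi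
  have hcard : (#{j | C x' j ≠ C x j} : ℝ) ≤ n := by
    exact_mod_cast (card_le_univ _).trans_eq (Fintype.card_fin n)
  linarith [(D i).correctProb_le_add_of_queryProb_le (hD i) (C x) (C x') true,
    mul_le_mul_of_nonneg_right hcard hr]

lemma FatShatters.exists_isLDC (h : FatShatters (fun x i ↦ (D i).correctProb (C x) true) γ I θ)
    (hD : ∀ i j, (D i).queryProb j ≤ r) (hr : 0 ≤ r) (hγ : 0 ≤ γ) (δ : ℝ) :
    ∃ C', IsLDC #I n q δ ((γ - δ * n * r) / 2) C' := by
  have hθ := fun i hi ↦ Set.Icc_subset_Icc hγ (sub_le_self 1 hγ)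
    (h.threshold_mem_Icc (fun x i ↦ (D i).correctProb_true_mem_Icc (C x)) (i := i) hi)
  choose x hx using h
  let e (j : Fin #I) : ι := I.equivFin.symm j
  have he : Function.Injective e := Subtype.val_injective.comp I.equivFin.symm.injective
  have heI (j : Fin #I) : e j ∈ I := (I.equivFin.symm j).2
  refine ⟨fun z ↦ C (x (Function.extend e z fun _ ↦ false)), fun j ↦ ?_⟩
  obtain ⟨D', hD'⟩ := (D (e j)).exists_correctProb_true_eq_half_add (hθ (e j) (heI j))
  refine ⟨D', fun z y hy ↦ ?_⟩
  set w := C (x (Function.extend e z fun _ ↦ false))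
  have hpattern := hx (Function.extend e z fun _ ↦ false) (e j) (heI j)
  rw [he.extend_apply] at hpattern
  have herr : #{j | y j ≠ w j} * r ≤ δ * n * r := mul_le_mul_of_nonneg_right hy hr
  have herr' : #{j | w j ≠ y j} * r ≤ δ * n * r := by simpa only [ne_comm] using herr
  have hlow := (D (e j)).correctProb_le_add_of_queryProb_le (hD _) w y true
  have hhigh := (D (e j)).correctProb_le_add_of_queryProb_le (hD _) y w true
  rw [D'.correctProb_eq_bitProb, hD']
  cases hz : z j <;>
    simp only [hz, bitProb, Bool.false_eq_true, if_true, if_false] at hpattern ⊢ <;> linarith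

end Decoders

/-- Average-case smooth codes can be turned into honest locally decodable codes,
losing only constant factors in the parameters. -/
theorem avg_smooth_code_to_LDC :
    ∃ c1 c2 c3 : ℝ, 0 < c1 ∧ 0 < c2 ∧ 0 < c3 ∧
      ∀ (k n q : ℕ), 0 < k → 0 < n →
      ∀ (c η : ℝ), 0 < c → η ∈ Set.Ioc (0 : ℝ) (1/2) →
      ∀ C : (Fin k → Bool) → Fin n → Bool, IsAvgSmoothCode k n q c η C →
      ∃ (l : ℕ) (δ' η' : ℝ) (C' : (Fin l → Bool) → Fin n → Bool),
        IsLDC l n q δ' η' C' ∧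
        c1 * η / c ≤ δ' ∧ δ' ≤ 1/2 ∧
        c2 * η ≤ η' ∧ η' ≤ 1/2 ∧
        c3 * η ^ 2 * k / Real.log (1/η) ≤ l := by
  refine ⟨1 / 40, 1 / 80, 1 / 100, by norm_num, by norm_num, by norm_num, ?_⟩
  rintro k n q hk hn c η hc hη C ⟨D, hquery, hcorrect⟩
  have : NeZero k := ⟨hk.ne'⟩
  have hη0 := hη.1
  obtain ⟨I, θ, hshatters, hI⟩ : ∃ I θ,
      FatShatters (fun x i ↦ (D i).correctProb (C x) true) (η / 20) I θ ∧
        1 / 100 * η ^ 2 * k / Real.log (1 / η) ≤ #I := by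
    rw [le_div_iff₀ (by positivity)] at hcorrect
    simpa using exists_fatShatters hη (fun x i ↦ (D i).correctProb_true_mem_Icc (C x))
      (by simpa only [← Decoder.correctProb_eq_bitProb, Fintype.card_fin] using hcorrect)
  have hlog : 0 < Real.log (1 / η) := Real.log_pos (one_lt_one_div hη0 (by linarith [hη.2]))
  have hI0 : I.Nonempty := card_pos.1 (Nat.cast_pos.1 (lt_of_lt_of_le (by positivity) hI))
  have hηc := hshatters.two_mul_le_of_queryProb_le hquery (by positivity) hI0
  obtain ⟨C', hC'⟩ := hshatters.exists_isLDC hquery (by positivity) (by positivity) (η / (40 * c))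
  refine ⟨#I, η / (40 * c), η / 80, C', ?_, ?_, ?_, ?_, ?_, hI⟩
  · convert hC' using 1
    field_simp
    norm_num
  · exact le_of_eq (by field_simp)
  · rw [mul_div_cancel₀ c (by positivity)] at hηc
    rw [div_le_iff₀ (by positivity)]
    linarith
  · linarith
  · linarith [hη.2]
end

section
/- Let ε > 0 and let μ be a probability distribution over 1-smooth functions on {−1,1}^n that is a (k, ε)-outlaw. Then there exists a probability distribution μ̃ over 1-smooth functions on {−1,1}^n of degree at most q = ⌈4/ε⌉ that is a (k, ε/2)-outlaw; in particular κ_{μ̃}(ε/2) ≥ κ_μ(ε). -/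
/-- The Fourier coefficient `f̂(S)` of `f : {−1,1}^n → ℝ`, where `{−1,1}^n` is encoded as
`Fin n → Bool` via `true ↦ 1`, `false ↦ −1`. -/
noncomputable def walshCoeff {n : ℕ} (f : (Fin n → Bool) → ℝ) (S : Finset (Fin n)) : ℝ :=
  (∑ x : Fin n → Bool, f x * ∏ i ∈ S, (if x i then (1 : ℝ) else -1)) / 2 ^ n

/-- The spectral norm `‖f‖_spec = Σ_S |f̂(S)|`. -/
noncomputable def specNorm {n : ℕ} (f : (Fin n → Bool) → ℝ) : ℝ :=
  ∑ S : Finset (Fin n), |walshCoeff f S|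

/-- The `i`-th discrete derivative `D_i f(x) = (f(x) − f(x^i))/2`. -/
noncomputable def discDeriv {n : ℕ} (i : Fin n) (f : (Fin n → Bool) → ℝ) :
    (Fin n → Bool) → ℝ :=
  fun x => (f x - f (Function.update x i (!x i))) / 2

/-- `f` is `σ`-smooth: every discrete derivative has spectral norm at most `σ/n`. -/
def IsSmoothFn {n : ℕ} (σ : ℝ) (f : (Fin n → Bool) → ℝ) : Prop :=
  ∀ i : Fin n, specNorm (discDeriv i f) ≤ σ / n

/-- `f` has degree at most `d`: all Fourier coefficients on sets of size `> d` vanish. -/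
def DegLE {n : ℕ} (d : ℕ) (f : (Fin n → Bool) → ℝ) : Prop :=
  ∀ S : Finset (Fin n), d < S.card → walshCoeff f S = 0
/-- The probability distribution `μ` on real-valued functions on `{−1,1}^n` is a
`(k,ε)`-outlaw: for independent `μ`-distributed `f_1, …, f_k` with mean `f̄ = E_μ[f]`,
`E‖(1/k)·Σ (f_i − f̄)‖_∞ ≥ ε`.  Here the sup norm on the (finite) product space
`(Fin n → Bool) → ℝ` is exactly the `L∞` norm `max_x |g x|`. -/
def IsOutlaw {n : ℕ} (k : ℕ) (ε : ℝ)
    (μ : MeasureTheory.Measure ((Fin n → Bool) → ℝ)) : Prop :=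
  ε ≤ ∫ F : Fin k → ((Fin n → Bool) → ℝ),
        ‖(k : ℝ)⁻¹ • ∑ i : Fin k, (F i - ∫ f, f ∂μ)‖
      ∂(MeasureTheory.Measure.pi fun _ : Fin k => μ)

/-! Push `μ` forward along the truncation of the Fourier expansion to degree at most `d`. Since
`Σ_S |S| |f̂(S)| = Σ_i ‖D_i f‖_spec ≤ σ` for a `σ`-smooth `f`, the discarded part has spectral norm,
hence sup norm, at most `σ / (d + 1)`. Moving every sample by at most `η` moves the mean by at
most `η`, so it changes the expected deviation of the empirical mean by at most `2 η`.
-/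

section

open MeasureTheory Finset

variable {n : ℕ}

/-- The Walsh character `χ_S(x) = ∏_{i ∈ S} x_i`, in the encoding `true ↦ 1`, `false ↦ −1`. -/
def walshChar (S : Finset (Fin n)) (x : Fin n → Bool) : ℝ :=
  ∏ i ∈ S, (if x i then (1 : ℝ) else -1)

/-- The permutation `x ↦ x^i` of the cube that flips the `i`-th coordinate. -/
def flipCoord (i : Fin n) : Equiv.Perm (Fin n → Bool) :=
  Function.Involutive.toPerm (fun x => Function.update x i (!x i)) fun x => by simp

/-- The part `Σ_{S ∈ A} f̂(S) χ_S` of the Fourier expansion of `f` supported on the family `A`;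
for `A = {S | #S ≤ d}` this is the truncation of `f` to degree at most `d`. -/
noncomputable def walshTruncate (A : Finset (Finset (Fin n))) (f : (Fin n → Bool) → ℝ) :
    (Fin n → Bool) → ℝ :=
  fun x => ∑ S ∈ A, walshCoeff f S * walshChar S x

lemma walshCoeff_eq_sum_walshChar (f : (Fin n → Bool) → ℝ) (S : Finset (Fin n)) :
    walshCoeff f S = (∑ x, f x * walshChar S x) / 2 ^ n := rfl

lemma abs_walshChar (S : Finset (Fin n)) (x : Fin n → Bool) : |walshChar S x| = 1 := by
  rw [walshChar, abs_prod]
  exact prod_eq_one fun i _ => by split_ifs <;> simp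

lemma walshChar_mul_self (S : Finset (Fin n)) (x : Fin n → Bool) :
    walshChar S x * walshChar S x = 1 := by
  rw [← abs_mul_abs_self, abs_walshChar, one_mul]

lemma flipCoord_apply (i j : Fin n) (x : Fin n → Bool) :
    flipCoord i x j = if j = i then !x i else x j :=
  Function.update_apply x i (!x i) j

lemma flipCoord_flipCoord (i : Fin n) (x : Fin n → Bool) : flipCoord i (flipCoord i x) = x := by
  ext j
  by_cases hj : j = i <;> simp [flipCoord_apply, hj]

lemma discDeriv_apply (i : Fin n) (f : (Fin n → Bool) → ℝ) (x : Fin n → Bool) :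
    discDeriv i f x = (f x - f (flipCoord i x)) / 2 := rfl

lemma walshChar_flipCoord (i : Fin n) (S : Finset (Fin n)) (x : Fin n → Bool) :
    walshChar S (flipCoord i x) = if i ∈ S then -walshChar S x else walshChar S x := by
  have sign_flip (j : Fin n) : (if flipCoord i x j then (1 : ℝ) else -1) =
      (if j = i then -1 else 1) * (if x j then 1 else -1) := by
    by_cases hj : j = i
    · cases hx : x i <;> simp [flipCoord_apply, hj, hx]
    · simp [flipCoord_apply, hj]
  simp only [walshChar, sign_flip, prod_mul_distrib, prod_ite_eq']
  split_ifs <;> ring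

lemma sum_walshChar_mul_walshChar_of_mem_of_notMem {S T : Finset (Fin n)} {i : Fin n}
    (hS : i ∈ S) (hT : i ∉ T) : ∑ x, walshChar S x * walshChar T x = 0 := by
  have flip_neg : ∑ x, walshChar S x * walshChar T x =
      -∑ x, walshChar S x * walshChar T x := by
    rw [← sum_neg_distrib, ← Equiv.sum_comp (flipCoord i)]
    simp [walshChar_flipCoord, hS, hT]
  linarith

lemma sum_walshChar_mul_walshChar (S T : Finset (Fin n)) :
    ∑ x, walshChar S x * walshChar T x = if S = T then 2 ^ n else 0 := by
  split_ifs with h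
  · simp [h, walshChar_mul_self]
  · obtain ⟨i, ⟨hS, hT⟩ | ⟨hT, hS⟩⟩ : ∃ i, i ∈ S ∧ i ∉ T ∨ i ∈ T ∧ i ∉ S := by
      by_contra! hST
      exact h (Finset.ext fun i => ⟨(hST i).1, (hST i).2⟩)
    · exact sum_walshChar_mul_walshChar_of_mem_of_notMem hS hT
    · simp only [mul_comm (walshChar S _)]
      exact sum_walshChar_mul_walshChar_of_mem_of_notMem hT hS

lemma sum_finset_walshChar_mul_walshChar (x y : Fin n → Bool) :
    ∑ S, walshChar S x * walshChar S y = if x = y then 2 ^ n else 0 := by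
  have factor : ∑ S, walshChar S x * walshChar S y =
      ∏ i, (1 + (if x i then (1 : ℝ) else -1) * (if y i then 1 else -1)) := by
    simp only [prod_one_add, walshChar, prod_mul_distrib, powerset_univ]
  split_ifs with h
  · simp [h, walshChar_mul_self]
  · obtain ⟨i, hi⟩ := Function.ne_iff.mp h
    rw [factor]
    refine prod_eq_zero (mem_univ i) ?_
    cases hx : x i <;> cases hy : y i <;> simp_all

theorem walshTruncate_univ (f : (Fin n → Bool) → ℝ) : walshTruncate univ f = f := by
  ext x
  calc ∑ S, walshCoeff f S * walshChar S x
      = (∑ y, f y * ∑ S, walshChar S y * walshChar S x) / 2 ^ n := by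
        simp only [walshCoeff_eq_sum_walshChar, div_mul_eq_mul_div, sum_mul, ← sum_div, mul_sum,
          mul_assoc]
        rw [sum_comm]
    _ = f x := by simp [sum_finset_walshChar_mul_walshChar]

lemma walshCoeff_walshTruncate (A : Finset (Finset (Fin n))) (f : (Fin n → Bool) → ℝ)
    (T : Finset (Fin n)) :
    walshCoeff (walshTruncate A f) T = if T ∈ A then walshCoeff f T else 0 := by
  calc walshCoeff (walshTruncate A f) T
      = (∑ S ∈ A, walshCoeff f S * ∑ x, walshChar S x * walshChar T x) / 2 ^ n := by
        simp only [walshCoeff_eq_sum_walshChar (walshTruncate A f), walshTruncate, sum_mul,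
          mul_sum, mul_assoc]
        rw [sum_comm]
    _ = if T ∈ A then walshCoeff f T else 0 := by
        simp [sum_walshChar_mul_walshChar, ite_div]

lemma walshCoeff_discDeriv (i : Fin n) (f : (Fin n → Bool) → ℝ) (S : Finset (Fin n)) :
    walshCoeff (discDeriv i f) S = if i ∈ S then walshCoeff f S else 0 := by
  have sum_flip : ∑ x, f (flipCoord i x) * walshChar S x =
      ∑ x, f x * walshChar S (flipCoord i x) := by
    rw [← Equiv.sum_comp (flipCoord i)]
    simp only [flipCoord_flipCoord]
  calc walshCoeff (discDeriv i f) S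
      = (∑ x, f x * walshChar S x - ∑ x, f (flipCoord i x) * walshChar S x) / 2 / 2 ^ n := by
        simp only [walshCoeff_eq_sum_walshChar, discDeriv_apply, div_mul_eq_mul_div, sub_mul,
          ← sum_div, sum_sub_distrib]
    _ = if i ∈ S then walshCoeff f S else 0 := by
        simp only [sum_flip, walshChar_flipCoord, walshCoeff_eq_sum_walshChar]
        split_ifs
        · simp only [mul_neg, sum_neg_distrib]
          ring
        · simp

lemma specNorm_discDeriv (i : Fin n) (f : (Fin n → Bool) → ℝ) :
    specNorm (discDeriv i f) = ∑ S, if i ∈ S then |walshCoeff f S| else 0 := by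
  simp only [specNorm, walshCoeff_discDeriv, apply_ite abs, abs_zero]

lemma IsSmoothFn.of_abs_walshCoeff_le {σ : ℝ} {f g : (Fin n → Bool) → ℝ} (hf : IsSmoothFn σ f)
    (hgf : ∀ S, |walshCoeff g S| ≤ |walshCoeff f S|) : IsSmoothFn σ g := fun i => by
  refine le_trans ?_ (hf i)
  rw [specNorm_discDeriv, specNorm_discDeriv]
  refine sum_le_sum fun S _ => ?_
  split_ifs
  exacts [hgf S, le_rfl]

lemma IsSmoothFn.truncate {σ : ℝ} {f : (Fin n → Bool) → ℝ} (hf : IsSmoothFn σ f)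
    (A : Finset (Finset (Fin n))) : IsSmoothFn σ (walshTruncate A f) :=
  hf.of_abs_walshCoeff_le fun S => by
    rw [walshCoeff_walshTruncate]
    split_ifs <;> simp

lemma degLE_walshTruncate (d : ℕ) (f : (Fin n → Bool) → ℝ) :
    DegLE d (walshTruncate {S | #S ≤ d} f) := fun S hS => by
  simp [walshCoeff_walshTruncate, hS]

lemma sum_card_mul_abs_walshCoeff (f : (Fin n → Bool) → ℝ) :
    ∑ S, #S * |walshCoeff f S| = ∑ i, specNorm (discDeriv i f) := by
  simp only [specNorm_discDeriv]
  rw [sum_comm]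
  simp

lemma IsSmoothFn.sum_card_mul_abs_walshCoeff_le {σ : ℝ} {f : (Fin n → Bool) → ℝ}
    (hf : IsSmoothFn σ f) (hσ : 0 ≤ σ) : ∑ S, #S * |walshCoeff f S| ≤ σ :=
  calc ∑ S, #S * |walshCoeff f S|
      = ∑ i, specNorm (discDeriv i f) := sum_card_mul_abs_walshCoeff f
    _ ≤ ∑ _i : Fin n, σ / n := sum_le_sum fun i _ => hf i
    _ = n / n * σ := by simp; ring
    _ ≤ σ := mul_le_of_le_one_left hσ (div_self_le_one _)

lemma norm_sub_walshTruncate_le (A : Finset (Finset (Fin n))) (f : (Fin n → Bool) → ℝ) :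
    ‖f - walshTruncate A f‖ ≤ ∑ S ∈ Aᶜ, |walshCoeff f S| := by
  refine (pi_norm_le_iff_of_nonneg (by positivity)).2 fun x => ?_
  have tail : (f - walshTruncate A f) x = ∑ S ∈ Aᶜ, walshCoeff f S * walshChar S x := by
    rw [Pi.sub_apply, sub_eq_iff_eq_add']
    nth_rw 1 [← walshTruncate_univ f]
    exact (sum_add_sum_compl A _).symm
  rw [tail]
  exact norm_sum_le_of_le _ fun S _ => by simp [abs_walshChar]

theorem IsSmoothFn.norm_sub_truncate_le {σ : ℝ} {f : (Fin n → Bool) → ℝ}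
    (hf : IsSmoothFn σ f) (hσ : 0 ≤ σ) (d : ℕ) :
    ‖f - walshTruncate {S | #S ≤ d} f‖ ≤ σ / (d + 1) := by
  rw [le_div_iff₀' (by positivity)]
  calc (d + 1) * ‖f - walshTruncate {S | #S ≤ d} f‖
      ≤ (d + 1) * ∑ S ∈ ({S | #S ≤ d} : Finset (Finset (Fin n)))ᶜ, |walshCoeff f S| := by
        gcongr
        exact norm_sub_walshTruncate_le _ f
    _ ≤ ∑ S ∈ ({S | #S ≤ d} : Finset (Finset (Fin n)))ᶜ, #S * |walshCoeff f S| := by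
        rw [mul_sum]
        gcongr with S hS
        have : d < #S := by simpa using hS
        exact_mod_cast this
    _ ≤ ∑ S, #S * |walshCoeff f S| :=
        sum_le_univ_sum_of_nonneg fun S => by positivity
    _ ≤ σ := hf.sum_card_mul_abs_walshCoeff_le hσ

lemma continuous_walshCoeff (S : Finset (Fin n)) : Continuous (walshCoeff · S) := by
  unfold walshCoeff
  fun_prop

lemma continuous_walshTruncate (A : Finset (Finset (Fin n))) : Continuous (walshTruncate A) :=
  continuous_pi fun x => continuous_finsetSum A fun S _ =>
    (continuous_walshCoeff S).mul_const (walshChar S x)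

lemma isClosed_setOf_isSmoothFn (σ : ℝ) :
    IsClosed {f : (Fin n → Bool) → ℝ | IsSmoothFn σ f} := by
  simp only [IsSmoothFn, Set.ofPred_forall]
  refine isClosed_iInter fun i => isClosed_le ?_ continuous_const
  unfold specNorm discDeriv walshCoeff
  fun_prop

lemma isClosed_setOf_degLE (d : ℕ) : IsClosed {f : (Fin n → Bool) → ℝ | DegLE d f} := by
  simp only [DegLE, Set.ofPred_forall]
  exact isClosed_iInter fun S => isClosed_iInter fun _ =>
    isClosed_eq (continuous_walshCoeff S) continuous_const

section MeanDeviation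

variable {E : Type*} [NormedAddCommGroup E] [NormedSpace ℝ E]

-- If one of `f`, `g` is not integrable, neither is the other, and both integrals are `0`.
lemma norm_integral_sub_integral_le_of_ae_le {α : Type*} [MeasurableSpace α] {μ : Measure α}
    [IsProbabilityMeasure μ] {f g : α → E} {c : ℝ} (hfg : AEStronglyMeasurable (f - g) μ)
    (hc : ∀ᵐ x ∂μ, ‖f x - g x‖ ≤ c) : ‖∫ x, f x ∂μ - ∫ x, g x ∂μ‖ ≤ c := by
  have hsub : Integrable (f - g) μ := .of_bound hfg c hc
  by_cases hg : Integrable g μ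
  · have hf : Integrable f μ := by simpa using hsub.add hg
    rw [← integral_sub hf hg]
    simpa using norm_integral_le_of_norm_le_const hc
  · have hf : ¬Integrable f μ := fun hf => hg (by simpa using hf.sub hsub)
    obtain ⟨x, hx⟩ := hc.exists
    simpa [integral_undef hf, integral_undef hg] using (norm_nonneg _).trans hx

lemma norm_inv_smul_sum_le {k : ℕ} {v : Fin k → E} {c : ℝ} (hc : 0 ≤ c) (hv : ∀ i, ‖v i‖ ≤ c) :
    ‖(k : ℝ)⁻¹ • ∑ i, v i‖ ≤ c :=
  calc ‖(k : ℝ)⁻¹ • ∑ i, v i‖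
      ≤ (k : ℝ)⁻¹ * ∑ _i : Fin k, c := by
        rw [norm_smul, norm_inv, Real.norm_natCast]
        gcongr
        exact norm_sum_le_of_le _ fun i _ => hv i
    _ = k / k * c := by simp; ring
    _ ≤ c := mul_le_of_le_one_left hc (div_self_le_one _)

variable [MeasurableSpace E]

/-- The expected distance `E‖(1/k) Σ (f_i − f̄)‖` of the empirical mean of `k` independent samples
of `μ` from the mean `f̄` of `μ`, so that a `(k, ε)`-outlaw is a distribution for which it is at
least `ε`. -/
noncomputable def meanDeviation (k : ℕ) (μ : Measure E) : ℝ :=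
  ∫ F : Fin k → E, ‖(k : ℝ)⁻¹ • ∑ i, (F i - ∫ f, f ∂μ)‖ ∂(Measure.pi fun _ => μ)

lemma isOutlaw_iff_le_meanDeviation {k : ℕ} {ε : ℝ} {μ : Measure ((Fin n → Bool) → ℝ)} :
    IsOutlaw k ε μ ↔ ε ≤ meanDeviation k μ := Iff.rfl

variable [BorelSpace E] [SecondCountableTopology E] {μ : Measure E} {T : E → E}

lemma meanDeviation_map (k : ℕ) [IsProbabilityMeasure μ] (hT : Measurable T) :
    meanDeviation k (μ.map T) =
      ∫ F : Fin k → E, ‖(k : ℝ)⁻¹ • ∑ i, (T (F i) - ∫ f, T f ∂μ)‖ ∂(Measure.pi fun _ => μ) := by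
  have : IsProbabilityMeasure (μ.map T) := Measure.isProbabilityMeasure_map hT.aemeasurable
  have mean_map : ∫ f, f ∂(μ.map T) = ∫ f, T f ∂μ :=
    integral_map hT.aemeasurable aestronglyMeasurable_id
  rw [meanDeviation, mean_map, ← Measure.pi_map_pi fun _ => hT.aemeasurable]
  have hTF : Measurable fun (F : Fin k → E) i => T (F i) := by fun_prop
  refine integral_map hTF.aemeasurable (Continuous.aestronglyMeasurable ?_)
  fun_prop

theorem abs_meanDeviation_sub_meanDeviation_map_le (k : ℕ) [IsProbabilityMeasure μ]
    (hT : Measurable T) {η : ℝ} (hη : ∀ᵐ f ∂μ, ‖f - T f‖ ≤ η) :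
    |meanDeviation k μ - meanDeviation k (μ.map T)| ≤ 2 * η := by
  have mean_close : ‖∫ f, f ∂μ - ∫ f, T f ∂μ‖ ≤ η :=
    norm_integral_sub_integral_le_of_ae_le
      (measurable_id.sub hT).aestronglyMeasurable hη
  have samples_close : ∀ᵐ F ∂(Measure.pi fun _ : Fin k => μ), ∀ i, ‖F i - T (F i)‖ ≤ η :=
    ae_all_iff.2 fun i => (Measure.quasiMeasurePreserving_eval (fun _ : Fin k => μ) i).ae hη
  rw [meanDeviation_map k hT, meanDeviation, ← Real.norm_eq_abs]
  refine norm_integral_sub_integral_le_of_ae_le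
    (Measurable.aestronglyMeasurable (by fun_prop)) ?_
  filter_upwards [samples_close] with F hF
  refine (abs_norm_sub_norm_le _ _).trans ?_
  rw [← smul_sub, ← sum_sub_distrib]
  refine norm_inv_smul_sum_le (by linarith [norm_nonneg (∫ f, f ∂μ - ∫ f, T f ∂μ)]) fun i => ?_
  rw [sub_sub_sub_comm, two_mul]
  exact norm_sub_le_of_le (hF i) mean_close

end MeanDeviation

theorem truncate_outlaw_general {σ : ℝ} (hσ : 0 ≤ σ) (k d : ℕ) {ε : ℝ}
    (μ : Measure ((Fin n → Bool) → ℝ)) [IsProbabilityMeasure μ]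
    (hsmooth : ∀ᵐ f ∂μ, IsSmoothFn σ f) (houtlaw : IsOutlaw k ε μ) :
    ∃ ν : Measure ((Fin n → Bool) → ℝ), IsProbabilityMeasure ν ∧
      (∀ᵐ f ∂ν, IsSmoothFn σ f ∧ DegLE d f) ∧ IsOutlaw k (ε - 2 * (σ / (d + 1))) ν := by
  have hT : Measurable (walshTruncate {S : Finset (Fin n) | #S ≤ d}) :=
    (continuous_walshTruncate _).measurable
  refine ⟨μ.map (walshTruncate {S | #S ≤ d}), Measure.isProbabilityMeasure_map hT.aemeasurable,
    ?_, ?_⟩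
  · refine (ae_map_iff hT.aemeasurable
      ((isClosed_setOf_isSmoothFn σ).inter (isClosed_setOf_degLE d)).measurableSet).2 ?_
    exact hsmooth.mono fun f hf => ⟨hf.truncate _, degLE_walshTruncate d f⟩
  · rw [isOutlaw_iff_le_meanDeviation] at houtlaw ⊢
    have := abs_meanDeviation_sub_meanDeviation_map_le k hT
      (hsmooth.mono fun f hf => hf.norm_sub_truncate_le hσ d)
    linarith [le_of_abs_le this]

lemma inv_natCeil_add_one_le_inv {a : ℝ} (ha : 0 < a) : ((⌈a⌉₊ : ℝ) + 1)⁻¹ ≤ a⁻¹ :=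
  inv_anti₀ ha ((Nat.le_ceil a).trans (by linarith))

lemma half_le_sub_two_mul_one_div_natCeil {ε : ℝ} (hε : 0 < ε) :
    ε / 2 ≤ ε - 2 * (1 / (⌈4 / ε⌉₊ + 1)) := by
  have := inv_natCeil_add_one_le_inv (div_pos four_pos hε)
  rw [inv_div] at this
  rw [one_div]
  linarith

end

/-- A `(k,ε)`-outlaw over 1-smooth functions yields a `(k, ε/2)`-outlaw over 1-smooth
functions of degree at most `⌈4/ε⌉`; in particular `κ_{μ̃}(ε/2) ≥ κ_μ(ε)`. -/
theorem truncate_outlaw (n k : ℕ) (ε : ℝ) (hε : 0 < ε)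
    (μ : MeasureTheory.Measure ((Fin n → Bool) → ℝ))
    (hμ : MeasureTheory.IsProbabilityMeasure μ)
    (hsupp : ∀ᵐ f ∂μ, IsSmoothFn 1 f)
    (houtlaw : IsOutlaw k ε μ) :
    ∃ ν : MeasureTheory.Measure ((Fin n → Bool) → ℝ),
      MeasureTheory.IsProbabilityMeasure ν ∧
      (∀ᵐ f ∂ν, IsSmoothFn 1 f ∧ DegLE ⌈4 / ε⌉₊ f) ∧
      IsOutlaw k (ε / 2) ν := by
  obtain ⟨ν, hν, hsmooth, hν_outlaw⟩ :=
    truncate_outlaw_general zero_le_one k ⌈4 / ε⌉₊ μ hsupp houtlaw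
  exact ⟨ν, hν, hsmooth, (half_le_sub_two_mul_one_div_natCeil hε).trans hν_outlaw⟩
end
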